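/- Assume that f is a first integral of V, i.e., ⟨V(x), ∇f(x)⟩ = 0 for all x ∈ Ω, and that Condition (B) holds. Then div V(x*) = 0 for every x* ∈ Γ such that V(x*) = 0. -/

import Mathlib

open Filter Topology

/-- Partial derivative of `g : ℝⁿ → ℝ` in the `i`-th coordinate direction. -/
noncomputable def pderiv' {n : ℕ} (g : (Fin n → ℝ) → ℝ) (i : Fin n) (x : Fin n → ℝ) : ℝ :=
  fderiv ℝ g x (Pi.single i 1)

/-- Divergence of a vector field on ℝⁿ. -/
noncomputable def diverg {n : ℕ} (V : (Fin n → ℝ) → (Fin n → ℝ)) (x : Fin n → ℝ) : ℝ :=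
  ∑ i, pderiv' (fun y => V y i) i x

/-- Gradient of `g : ℝⁿ → ℝ`. -/
noncomputable def grad' {n : ℕ} (g : (Fin n → ℝ) → ℝ) (x : Fin n → ℝ) : Fin n → ℝ :=
  fun i => pderiv' g i x

/-- The Euclidean inner product on ℝⁿ. -/
noncomputable def dotp {n : ℕ} (u w : Fin n → ℝ) : ℝ := ∑ i, u i * w i

/-- Condition (A): for every `x* ∈ Γ`, `|f x|^(r+1) · div W x → 0` as `x → x*`
with `x ∈ Ω \ Γ`. -/
def CondA {n : ℕ} (Ω Γ : Set (Fin n → ℝ)) (f : (Fin n → ℝ) → ℝ) (r : ℝ)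
    (W : (Fin n → ℝ) → (Fin n → ℝ)) : Prop :=
  ∀ xs ∈ Γ, Filter.Tendsto (fun x => |f x| ^ (r + 1) * diverg W x)
    (nhdsWithin xs (Ω \ Γ)) (nhds 0)

/-- Condition (B): for every `x* ∈ Γ` with `V x* = 0`, one has
`|f x|^r · div W x → 0` and `|f x|^(r+1) · ∂(div W)/∂x_i x → 0` as `x → x*`
with `x ∈ Ω \ Γ`, for each `i`. -/
def CondB {n : ℕ} (Ω Γ : Set (Fin n → ℝ)) (f : (Fin n → ℝ) → ℝ) (r : ℝ)
    (V W : (Fin n → ℝ) → (Fin n → ℝ)) : Prop :=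
  ∀ xs ∈ Γ, V xs = 0 →
    Filter.Tendsto (fun x => |f x| ^ r * diverg W x) (nhdsWithin xs (Ω \ Γ)) (nhds 0) ∧
    ∀ i : Fin n, Filter.Tendsto (fun x => |f x| ^ (r + 1) * pderiv' (diverg W) i x)
      (nhdsWithin xs (Ω \ Γ)) (nhds 0)

/-!
Since `f` is constant along `V`, so is `|f| ^ (-r)`, and the product rule for the divergence gives
`|f| ^ r * div W = div V` off `Γ`. A regular zero of `f` is a limit of points off `Γ`, so there the
continuous function `div V` takes the limit of `|f| ^ r * div W` as its value.
-/

section Calculus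

variable {n : ℕ} {f φ : (Fin n → ℝ) → ℝ} {V W : (Fin n → ℝ) → (Fin n → ℝ)} {x : Fin n → ℝ}

lemma pderiv'_mul (hφ : DifferentiableAt ℝ φ x) (hf : DifferentiableAt ℝ f x) (i : Fin n) :
    pderiv' (fun y => φ y * f y) i x = φ x * pderiv' f i x + f x * pderiv' φ i x := by
  simp only [pderiv', fderiv_fun_mul hφ hf, add_apply, smul_apply, smul_eq_mul]

lemma diverg_smul (hφ : DifferentiableAt ℝ φ x) (hV : DifferentiableAt ℝ V x) :
    diverg (fun y => φ y • V y) x = φ x * diverg V x + dotp (V x) (grad' φ x) := by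
  simp only [diverg, dotp, grad', Pi.smul_apply, smul_eq_mul,
    pderiv'_mul hφ (differentiableAt_pi.1 hV _), Finset.sum_add_distrib, Finset.mul_sum]

lemma diverg_eq_of_eventuallyEq (h : V =ᶠ[𝓝 x] W) : diverg V x = diverg W x :=
  Finset.sum_congr rfl fun i _ => by
    have hi : (fun y => V y i) =ᶠ[𝓝 x] fun y => W y i := h.fun_comp fun v => v i
    rw [pderiv', hi.fderiv_eq, pderiv']

lemma continuousAt_diverg (hV : ContDiffAt ℝ 1 V x) : ContinuousAt (diverg V) x :=
  tendsto_finsetSum _ fun i _ =>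
    ((contDiffAt_pi.1 hV i).continuousAt_fderiv one_ne_zero).clm_apply continuousAt_const

lemma grad'_comp {g : ℝ → ℝ} (hg : DifferentiableAt ℝ g (f x)) (hf : DifferentiableAt ℝ f x) :
    grad' (fun y => g (f y)) x = deriv g (f x) • grad' f x := by
  have hgf : HasFDerivAt (fun y => g (f y)) _ x := hg.hasDerivAt.comp_hasFDerivAt x hf.hasFDerivAt
  ext i
  simp only [grad', pderiv', hgf.fderiv, smul_apply, Pi.smul_apply]

lemma grad'_eq_zero_of_eventuallyEq_const {c : ℝ} (h : f =ᶠ[𝓝 x] fun _ => c) : grad' f x = 0 := by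
  ext i
  simp only [grad', pderiv', h.fderiv_eq, fderiv_fun_const, Pi.zero_apply, zero_apply]

lemma mem_closure_setOf_ne_of_grad'_ne_zero (hx : grad' f x ≠ 0) (c : ℝ) :
    x ∈ closure {y | f y ≠ c} := by
  rw [mem_closure_iff_frequently]
  exact fun h => hx (grad'_eq_zero_of_eventuallyEq_const (h.mono fun _ => not_not.1))

end Calculus

section FirstIntegral

variable {n : ℕ} {f : (Fin n → ℝ) → ℝ} {V : (Fin n → ℝ) → (Fin n → ℝ)} {x : Fin n → ℝ}

lemma diverg_comp_smul_of_dotp_grad'_eq_zero {g : ℝ → ℝ} (hg : DifferentiableAt ℝ g (f x))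
    (hf : DifferentiableAt ℝ f x) (hV : DifferentiableAt ℝ V x)
    (hfi : dotp (V x) (grad' f x) = 0) :
    diverg (fun y => g (f y) • V y) x = g (f x) * diverg V x := by
  have hgrad : dotp (V x) (grad' (fun y => g (f y)) x) = 0 := by
    rw [grad'_comp hg hf]
    exact (dotProduct_smul _ _ _).trans (smul_eq_zero_of_right _ hfi)
  have hgf : DifferentiableAt ℝ (fun y => g (f y)) x := hg.comp x hf
  rw [diverg_smul hgf hV, hgrad, add_zero]

lemma abs_rpow_mul_diverg_abs_rpow_neg_smul (r : ℝ) (hf : DifferentiableAt ℝ f x)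
    (hV : DifferentiableAt ℝ V x) (hfi : dotp (V x) (grad' f x) = 0) (hfx : f x ≠ 0) :
    |f x| ^ r * diverg (fun y => |f y| ^ (-r) • V y) x = diverg V x := by
  have habs : DifferentiableAt ℝ (fun t : ℝ => |t| ^ (-r)) (f x) :=
    (differentiableAt_abs hfx).rpow_const (Or.inl (abs_ne_zero.2 hfx))
  rw [diverg_comp_smul_of_dotp_grad'_eq_zero habs hf hV hfi, ← mul_assoc,
    ← Real.rpow_add (abs_pos.2 hfx), add_neg_cancel, Real.rpow_zero, one_mul]

end FirstIntegral

theorem stmt3_general {n : ℕ} {Ω Γ : Set (Fin n → ℝ)} (hΩ : IsOpen Ω) {f : (Fin n → ℝ) → ℝ}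
    (hf : DifferentiableOn ℝ f Ω) (hΓ : Γ = {x | x ∈ Ω ∧ f x = 0})
    {V W : (Fin n → ℝ) → (Fin n → ℝ)} (hV : ContDiffOn ℝ 1 V Ω) {r : ℝ}
    (hW : ∀ x ∈ Ω \ Γ, W x = |f x| ^ (-r) • V x) (hfi : ∀ x ∈ Ω, dotp (V x) (grad' f x) = 0)
    {xs : Fin n → ℝ} (hxs : xs ∈ Ω) (hcl : xs ∈ closure {x | f x ≠ 0}) {c : ℝ}
    (hlim : Tendsto (fun x => |f x| ^ r * diverg W x) (𝓝[Ω \ Γ] xs) (𝓝 c)) :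
    diverg V xs = c := by
  have hdiff : Ω \ Γ = Ω ∩ {x | f x ≠ 0} := by subst hΓ; ext; simp +contextual
  have hopen : IsOpen (Ω \ Γ) :=
    hdiff ▸ hf.continuousOn.isOpen_inter_preimage hΩ isOpen_compl_singleton
  have hdiv : ∀ x ∈ Ω \ Γ, |f x| ^ r * diverg W x = diverg V x := fun x hx => by
    rw [diverg_eq_of_eventuallyEq (eventually_of_mem (hopen.mem_nhds hx) hW)]
    exact abs_rpow_mul_diverg_abs_rpow_neg_smul r (hf.differentiableAt (hΩ.mem_nhds hx.1))
      ((hV.differentiableOn one_ne_zero).differentiableAt (hΩ.mem_nhds hx.1)) (hfi x hx.1)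
      (hdiff ▸ hx).2
  have : (𝓝[Ω \ Γ] xs).NeBot :=
    mem_closure_iff_nhdsWithin_neBot.1 (hdiff ▸ hΩ.inter_closure ⟨hxs, hcl⟩)
  have hcont := continuousAt_diverg (hV.contDiffAt (hΩ.mem_nhds hxs))
  exact tendsto_nhds_unique (hcont.mono_left nhdsWithin_le_nhds)
    (hlim.congr' (eventually_nhdsWithin_of_forall hdiv))

/-- If `f` is a first integral of `V` and Condition (B) holds, then `div V x* = 0`
for every `x* ∈ Γ` with `V x* = 0`. -/
theorem stmt3 {n : ℕ} (hn : 2 ≤ n) (Ω Γ : Set (Fin n → ℝ)) (hΩ : IsOpen Ω)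
    (f : (Fin n → ℝ) → ℝ) (s : ℕ) (hs : 2 ≤ s) (hf : ContDiffOn ℝ s f Ω)
    (hΓ : Γ = {x | x ∈ Ω ∧ f x = 0}) (hΓne : Γ.Nonempty)
    (hreg : ∀ x ∈ Γ, grad' f x ≠ 0)
    (V : (Fin n → ℝ) → (Fin n → ℝ)) (hV : ContDiffOn ℝ s V Ω)
    (r : ℝ) (hr : 0 < r)
    (W : (Fin n → ℝ) → (Fin n → ℝ))
    (hW : ∀ x ∈ Ω \ Γ, W x = |f x| ^ (-r) • V x)
    (hfi : ∀ x ∈ Ω, dotp (V x) (grad' f x) = 0)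
    (hB : CondB Ω Γ f r V W) :
    ∀ xs ∈ Γ, V xs = 0 → diverg V xs = 0 :=
  fun xs hxs hVxs => stmt3_general hΩ (hf.differentiableOn (by positivity)) hΓ
    (hV.of_le (by exact_mod_cast one_le_two.trans hs)) hW hfi (hΓ ▸ hxs : _ ∧ _).1
    (mem_closure_setOf_ne_of_grad'_ne_zero (hreg xs hxs) 0) (hB xs hxs hVxs).1
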